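/- Fix an integer m > 2 and consider ℝ^m with the generalized metric in which the m-th coordinate direction is scaled by 1 + f of the (m−1)-st coordinate. Then for all p, q ∈ ℝ^m the geodesic distance satisfies ‖p − q‖ ≤ d_g(p, q); and if moreover the m-th coordinates of p and q are equal (p_m = q_m), then d_g(p, q) = ‖p − q‖. -/

import Mathlib

open Real MeasureTheory

noncomputable section

/-- The bump function `f(y) = A (1 + cos (π y))`. -/
def f (A y : ℝ) : ℝ := A * (1 + Real.cos (Real.pi * y))

/-- The g-length of a path `γ : ℝ → ℝᵐ` in the metric where the `m`-th
coordinate direction is scaled by `1 + f` of the `(m−1)`-st coordinate: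
`L_g(γ) = ∫₀¹ √( Σ_{i=1}^{m−1} γᵢ′(t)² + (1 + f(γ_{m−1}(t))) γ_m′(t)² ) dt`. -/
def LgM (m : ℕ) (hm : 2 < m) (A : ℝ) (γ : ℝ → EuclideanSpace ℝ (Fin m)) : ℝ :=
  ∫ t in (0:ℝ)..1,
    Real.sqrt
      ((∑ i ∈ Finset.univ.erase (⟨m - 1, by omega⟩ : Fin m), (deriv γ t i) ^ 2)
        + (1 + f A (γ t ⟨m - 2, by omega⟩)) * (deriv γ t ⟨m - 1, by omega⟩) ^ 2)

/-- The geodesic distance on `ℝᵐ`: the infimum of g-lengths of C¹ paths from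
`p` to `q`. -/
def dgM (m : ℕ) (hm : 2 < m) (A : ℝ) (p q : EuclideanSpace ℝ (Fin m)) : ℝ :=
  sInf {L : ℝ | ∃ γ : ℝ → EuclideanSpace ℝ (Fin m),
    ContDiff ℝ 1 γ ∧ γ 0 = p ∧ γ 1 = q ∧ L = LgM m hm A γ}

/-!
A metric whose speed dominates the Euclidean one at every point cannot shorten displacements:
`‖γ 1 - γ 0‖ ≤ ∫ ‖γ'‖ ≤ L(γ)`. Stretching the coordinate `j` by a factor `w ≥ 1` gives such a
metric, and it leaves the speed of vectors with vanishing `j`-th coordinate unchanged. When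
`p j = q j` the straight segment from `p` to `q` therefore has length exactly `‖p - q‖`.
-/

section FinslerDist

variable {E : Type*} [NormedAddCommGroup E] [NormedSpace ℝ E] {F : E → E → ℝ} {γ : ℝ → E}

/-- The length of the path `γ` on `[0, 1]` for the Finsler structure in which `F x v` is the speed
of a tangent vector `v` at the point `x`; neither homogeneity nor convexity of `F x` is imposed. -/
def finslerLength (F : E → E → ℝ) (γ : ℝ → E) : ℝ :=
  ∫ t in (0:ℝ)..1, F (γ t) (deriv γ t)

/-- The Finsler distance: the infimum of the `F`-lengths of `C¹` paths from `p` to `q`. It is an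
infimum of real numbers, so it is meaningful only for `F` bounded below, such as `F ≥ 0`. -/
def finslerDist (F : E → E → ℝ) (p q : E) : ℝ :=
  sInf {L : ℝ | ∃ γ : ℝ → E, ContDiff ℝ 1 γ ∧ γ 0 = p ∧ γ 1 = q ∧ L = finslerLength F γ}

theorem finslerLength_nonneg (hF : ∀ x v, 0 ≤ F x v) : 0 ≤ finslerLength F γ :=
  intervalIntegral.integral_nonneg zero_le_one fun _ _ => hF _ _

theorem norm_sub_le_finslerLength (hFc : Continuous (Function.uncurry F))
    (hF : ∀ x v, ‖v‖ ≤ F x v) (hγ : ContDiff ℝ 1 γ) :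
    ‖γ 0 - γ 1‖ ≤ finslerLength F γ := by
  have hspeed : Continuous fun t => F (γ t) (deriv γ t) :=
    hFc.comp (hγ.continuous.prodMk (hγ.continuous_deriv le_rfl))
  rw [norm_sub_rev]
  exact norm_sub_le_integral_of_norm_deriv_le_of_le zero_le_one hγ.continuous.continuousOn
    (hγ.differentiable one_ne_zero).differentiableOn (.of_forall fun _ _ => hF _ _)
    (hspeed.intervalIntegrable 0 1)

theorem finslerLength_lineMap {p q : E} (h : ∀ x ∈ segment ℝ p q, F x (q - p) = ‖q - p‖) :
    finslerLength F (AffineMap.lineMap p q) = ‖p - q‖ := by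
  have hspeed : ∀ t ∈ Set.uIcc (0:ℝ) 1,
      F (AffineMap.lineMap p q t) (deriv (AffineMap.lineMap p q) t) = ‖q - p‖ := by
    intro t ht
    rw [Set.uIcc_of_le zero_le_one] at ht
    rw [AffineMap.hasDerivAt_lineMap.deriv, h _ (lineMap_mem_segment ℝ p q ht)]
  rw [finslerLength, intervalIntegral.integral_congr hspeed, norm_sub_rev]
  simp

theorem finslerDist_le_finslerLength (hF : ∀ x v, 0 ≤ F x v) (hγ : ContDiff ℝ 1 γ) :
    finslerDist F (γ 0) (γ 1) ≤ finslerLength F γ := by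
  refine csInf_le ⟨0, ?_⟩ ⟨γ, hγ, rfl, rfl, rfl⟩
  rintro _ ⟨γ', -, -, -, rfl⟩
  exact finslerLength_nonneg hF

theorem norm_sub_le_finslerDist (hFc : Continuous (Function.uncurry F))
    (hF : ∀ x v, ‖v‖ ≤ F x v) (p q : E) : ‖p - q‖ ≤ finslerDist F p q := by
  refine le_csInf ⟨_, AffineMap.lineMap p q, AffineMap.contDiff_lineMap p q,
    AffineMap.lineMap_apply_zero p q, AffineMap.lineMap_apply_one p q, rfl⟩ ?_
  rintro _ ⟨γ, hγ, rfl, rfl, rfl⟩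
  exact norm_sub_le_finslerLength hFc hF hγ

theorem finslerDist_le_norm_sub (hF : ∀ x v, 0 ≤ F x v) {p q : E}
    (h : ∀ x ∈ segment ℝ p q, F x (q - p) = ‖q - p‖) : finslerDist F p q ≤ ‖p - q‖ := by
  have hle := finslerDist_le_finslerLength hF (AffineMap.contDiff_lineMap p q)
  rwa [AffineMap.lineMap_apply_zero, AffineMap.lineMap_apply_one, finslerLength_lineMap h] at hle

end FinslerDist

section StretchedNorm

variable {ι : Type*} [Fintype ι] [DecidableEq ι] (j : ι)

/-- The Euclidean norm with the square of the `j`-th coordinate weighted by `c`. It is the speed of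
a tangent vector at a point where the metric tensor scales the direction `j` by `c`. For `c < 0` the
radicand may be negative, and the value is then `0`. -/
def stretchedNorm (c : ℝ) (v : EuclideanSpace ℝ ι) : ℝ :=
  √((∑ i ∈ Finset.univ.erase j, v i ^ 2) + c * v j ^ 2)

theorem stretchedNorm_nonneg (c : ℝ) (v : EuclideanSpace ℝ ι) : 0 ≤ stretchedNorm j c v :=
  Real.sqrt_nonneg _

theorem continuous_stretchedNorm : Continuous (Function.uncurry (stretchedNorm j)) := by
  unfold Function.uncurry stretchedNorm
  fun_prop

theorem stretchedNorm_one (v : EuclideanSpace ℝ ι) : stretchedNorm j 1 v = ‖v‖ := by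
  rw [stretchedNorm, one_mul, Finset.sum_erase_add _ _ (Finset.mem_univ j),
    ← EuclideanSpace.real_norm_sq_eq, Real.sqrt_sq (norm_nonneg v)]

theorem stretchedNorm_mono (v : EuclideanSpace ℝ ι) : Monotone (stretchedNorm j · v) := by
  intro c d hcd
  simp only [stretchedNorm]
  gcongr

variable {j}

theorem stretchedNorm_of_apply_eq_zero {v : EuclideanSpace ℝ ι} (hv : v j = 0) (c : ℝ) :
    stretchedNorm j c v = ‖v‖ := by
  simp [← stretchedNorm_one j, stretchedNorm, hv]

theorem norm_le_stretchedNorm {c : ℝ} (hc : 1 ≤ c) (v : EuclideanSpace ℝ ι) :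
    ‖v‖ ≤ stretchedNorm j c v :=
  (stretchedNorm_one j v).symm.trans_le (stretchedNorm_mono j v hc)

theorem dgM_bounds_general {w : EuclideanSpace ℝ ι → ℝ} (hwc : Continuous w) (hw : ∀ x, 1 ≤ w x)
    (p q : EuclideanSpace ℝ ι) :
    ‖p - q‖ ≤ finslerDist (fun x => stretchedNorm j (w x)) p q ∧
    (p j = q j → finslerDist (fun x => stretchedNorm j (w x)) p q = ‖p - q‖) := by
  have hspeed : Continuous (Function.uncurry fun x => stretchedNorm j (w x)) :=
    (continuous_stretchedNorm j).comp (hwc.prodMap continuous_id)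
  have hlower : ‖p - q‖ ≤ finslerDist (fun x => stretchedNorm j (w x)) p q :=
    norm_sub_le_finslerDist hspeed (fun x => norm_le_stretchedNorm (hw x)) p q
  refine ⟨hlower, fun hpq => le_antisymm ?_ hlower⟩
  have hj : (q - p) j = 0 := by simp [hpq]
  exact finslerDist_le_norm_sub (fun x => stretchedNorm_nonneg j (w x))
    fun x _ => stretchedNorm_of_apply_eq_zero hj (w x)

end StretchedNorm

theorem f_nonneg {A : ℝ} (hA : 0 ≤ A) (y : ℝ) : 0 ≤ f A y :=
  mul_nonneg hA (by linarith [Real.neg_one_le_cos (π * y)])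

theorem continuous_f (A : ℝ) : Continuous (f A) := by
  unfold f
  fun_prop

theorem dgM_eq_finslerDist {m : ℕ} (hm : 2 < m) (A : ℝ) :
    dgM m hm A = finslerDist fun x => stretchedNorm ⟨m - 1, by omega⟩
      (1 + f A (x ⟨m - 2, by omega⟩)) :=
  rfl

/-- In dimension `m > 2`, the geodesic distance is bounded below by the
Euclidean distance, with equality when the `m`-th coordinates agree. -/
theorem dgM_bounds (m : ℕ) (hm : 2 < m) (A : ℝ) (hA0 : 0 < A) (hA : A ≤ 3 / 8)
    (p q : EuclideanSpace ℝ (Fin m)) :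
    ‖p - q‖ ≤ dgM m hm A p q ∧
    (p ⟨m - 1, by omega⟩ = q ⟨m - 1, by omega⟩ → dgM m hm A p q = ‖p - q‖) := by
  rw [dgM_eq_finslerDist]
  exact dgM_bounds_general (continuous_const.add ((continuous_f A).comp (by fun_prop)))
    (fun _ => le_add_of_nonneg_right (f_nonneg hA0.le _)) p q
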